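/- Let f be a holomorphic function on an open neighborhood of 0 in ℂ², not identically zero near 0, and suppose the vanishing order of f at 0 equals k ≥ 1. Then for every real number c with c > 2/k, the function z ↦ |f(z)|^{-2c} is not integrable on any open neighborhood of 0 with respect to Lebesgue measure on ℂ² ≅ ℝ⁴. In particular the complex singularity exponent of f at 0 satisfies c₀(f) ≤ 2/k. (Upper bound of Lemma 4.3.) -/

import Mathlib

open MeasureTheory

open Filter Topology Metric Complex in
theorem osgood_aux (f : ℂ × ℂ → ℂ) (U : Set (ℂ × ℂ)) (hU : IsOpen U) (h0U : (0 : ℂ × ℂ) ∈ U)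
    (hf : DifferentiableOn ℂ f U) : AnalyticAt ℂ f 0 := by
  obtain ⟨R, hR, hRU⟩ : ∃ R : ℝ, 0 < R ∧ closedBall (0 : ℂ × ℂ) R ⊆ U :=
    Metric.nhds_basis_closedBall.mem_iff.1 (hU.mem_nhds h0U)
  have hmem : ∀ x y : ℂ, ‖x‖ ≤ R → ‖y‖ ≤ R → (x, y) ∈ U := by
    intro x y hx hy
    apply hRU
    rw [mem_closedBall_zero_iff, Prod.norm_def]
    exact max_le hx hy
  have hdf : ∀ x y : ℂ, ‖x‖ ≤ R → ‖y‖ ≤ R → DifferentiableAt ℂ f (x, y) := fun x y hx hy =>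
    (hf _ (hmem x y hx hy)).differentiableAt (hU.mem_nhds (hmem x y hx hy))
  -- retraction onto the closed ball
  let ρ : ℂ → ℂ := fun z => ((R / max R ‖z‖ : ℝ) : ℂ) * z
  have hρc : Continuous ρ := by
    have : ∀ z : ℂ, max R ‖z‖ ≠ 0 := fun z => (lt_max_of_lt_left hR).ne'
    fun_prop (disch := assumption)
  have hρ1 : ∀ z, ‖z‖ ≤ R → ρ z = z := by
    intro z hz
    simp [ρ, max_eq_left hz, hR.ne']
  have hρ2 : ∀ z, ‖ρ z‖ ≤ R := by
    intro z
    have h1 : 0 < max R ‖z‖ := lt_max_of_lt_left hR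
    simp only [ρ, norm_mul, Complex.norm_real, Real.norm_eq_abs]
    rw [abs_of_nonneg (by positivity), div_mul_eq_mul_div, div_le_iff₀ h1]
    exact mul_le_mul_of_nonneg_left (le_max_right _ _) hR.le
  let K := sphere (0 : ℂ) R
  have hK : ∀ ζ : K, ‖(ζ : ℂ)‖ = R := fun ζ => mem_sphere_zero_iff_norm.1 ζ.2
  let F : C(ℂ, C(K, ℂ)) := ContinuousMap.curry
    ⟨fun p : ℂ × K => f ((p.2 : ℂ), ρ p.1), by
      rw [continuous_iff_continuousAt]
      intro p
      have h1 : ContinuousAt f ((p.2 : ℂ), ρ p.1) := (hdf _ _ (hK _).le (hρ2 _)).continuousAt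
      exact ContinuousAt.comp (f := fun p : ℂ × K => ((p.2 : ℂ), ρ p.1)) h1
        (by fun_prop)⟩
  have hF : ∀ y ζ, F y ζ = f ((ζ : ℂ), ρ y) := fun y ζ => rfl
  have hFan : AnalyticAt ℂ F 0 := by
    lift R to NNReal using hR.le
    have h1 := hasFPowerSeriesOn_cauchy_integral (f := F) (c := 0) (R := R)
      (F.continuous.continuousOn.circleIntegrable hR.le) (by exact_mod_cast hR)
    refine h1.analyticAt.congr ?_
    filter_upwards [ball_mem_nhds (0 : ℂ) hR] with w hw
    ext ζ
    have hwn : ‖w‖ < R := by simpa using hw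
    have h2 := two_pi_I_inv_smul_circleIntegral_sub_inv_smul_of_differentiable_on_off_countable
      (f := fun y => f ((ζ : ℂ), y)) (R := R) (c := 0) (w := w) (s := ∅) (by simp) hw
      (by
        intro y hy
        have hy' : ‖y‖ ≤ R := by simpa using hy
        have := (hdf ζ y (hK _).le hy').continuousAt
        exact (ContinuousAt.comp (f := fun y => ((ζ : ℂ), y)) this
          (by fun_prop)).continuousWithinAt)
      (by
        intro y hy
        have hy' : ‖y‖ < R := by simpa using hy
        have := (hdf ζ y (hK _).le hy'.le)
        exact DifferentiableAt.comp y (f := fun y => ((ζ : ℂ), y)) this (by fun_prop))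
    rw [hF, hρ1 w hwn.le, ← h2]
    rw [ContinuousMap.smul_apply]
    congr 1
    have h3 := ContinuousLinearMap.intervalIntegral_comp_comm
      (ContinuousMap.evalCLM ℂ ζ : C(K, ℂ) →L[ℂ] ℂ)
      (μ := volume) (a := 0) (b := 2 * Real.pi)
      (f := fun θ => deriv (circleMap 0 R) θ • (circleMap 0 R θ - w)⁻¹ • F (circleMap 0 R θ))
      (by
        apply Continuous.intervalIntegrable
        have : ∀ θ, circleMap 0 R θ - w ≠ 0 := fun θ =>
          sub_ne_zero.2 (circleMap_ne_mem_ball hw θ)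
        simp only [deriv_circleMap]
        fun_prop (disch := assumption))
    simp only [circleIntegral]
    refine Eq.trans h3.symm ?_
    apply intervalIntegral.integral_congr
    intro θ _
    have : ‖circleMap 0 (R : ℝ) θ‖ ≤ R := by simp
    simp [hF, hρ1 _ this]
  let cm : ℝ → K := fun θ => ⟨circleMap 0 R θ, circleMap_mem_sphere 0 hR.le θ⟩
  have hcm : Continuous cm := by fun_prop
  let T : C(K, ℂ) →L[ℂ] ℂ := LinearMap.mkContinuous
    { toFun := fun g => ∫ θ in (0 : ℝ)..2 * Real.pi, deriv (circleMap 0 R) θ • g (cm θ)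
      map_add' := by
        intro g h
        rw [← intervalIntegral.integral_add]
        · simp [mul_add]
        · apply Continuous.intervalIntegrable
          simp only [deriv_circleMap]
          fun_prop
        · apply Continuous.intervalIntegrable
          simp only [deriv_circleMap]
          fun_prop
      map_smul' := by
        intro a g
        rw [RingHom.id_apply, ← intervalIntegral.integral_smul]
        congr 1
        ext θ
        simp only [ContinuousMap.smul_apply, smul_eq_mul]
        ring } (R * |2 * Real.pi - 0|) (by
      intro g
      rw [mul_right_comm]
      apply intervalIntegral.norm_integral_le_of_norm_le_const
      intro θ _
      rw [norm_smul]
      have : ‖deriv (circleMap 0 R) θ‖ = R := by simp [deriv_circleMap, hR.le]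
      rw [this]
      exact mul_le_mul_of_nonneg_left (g.norm_coe_le_norm _) hR.le)
  have hT : ∀ g, T g = ∫ θ in (0 : ℝ)..2 * Real.pi, deriv (circleMap 0 R) θ • g (cm θ) :=
    fun g => rfl
  let ι : C(K, ℂ) := ⟨fun ζ => (ζ : ℂ), by fun_prop⟩
  have hunit : ∀ x : ℂ, ‖x‖ < R → IsUnit (ι - x • (1 : C(K, ℂ))) := by
    intro x hx
    rw [ContinuousMap.isUnit_iff_forall_ne_zero]
    intro ζ h
    have h' : (ζ : ℂ) = x := by simpa [ι, sub_eq_zero] using h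
    have := hK ζ
    rw [h'] at this
    exact hx.ne this
  have hk : AnalyticAt ℂ (fun x : ℂ => Ring.inverse (ι - x • (1 : C(K, ℂ)))) 0 := by
    obtain ⟨u, hu⟩ := hunit 0 (by simpa using hR)
    have h1 := analyticAt_inverse (𝕜 := ℂ) u
    rw [hu] at h1
    exact AnalyticAt.comp (f := fun x : ℂ => ι - x • (1 : C(K, ℂ))) h1
      (analyticAt_const.sub (analyticAt_id.smul analyticAt_const))
  have hmain : AnalyticAt ℂ (fun p : ℂ × ℂ => (2 * Real.pi * I : ℂ)⁻¹ •
      T (Ring.inverse (ι - p.1 • (1 : C(K, ℂ))) * F p.2)) 0 := by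
    have h1 : AnalyticAt ℂ (fun p : ℂ × ℂ => Ring.inverse (ι - p.1 • (1 : C(K, ℂ)))) 0 :=
      AnalyticAt.comp (f := fun p : ℂ × ℂ => p.1) (x := (0 : ℂ × ℂ)) hk analyticAt_fst
    have h2 : AnalyticAt ℂ (fun p : ℂ × ℂ => F p.2) 0 :=
      AnalyticAt.comp (f := fun p : ℂ × ℂ => p.2) (x := (0 : ℂ × ℂ)) hFan analyticAt_snd
    have h3 := (T.analyticAt _).comp (h1.mul h2)
    exact (analyticAt_const (v := (2 * Real.pi * I : ℂ)⁻¹)).smul h3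
  refine hmain.congr ?_
  filter_upwards [ball_mem_nhds (0 : ℂ × ℂ) hR] with p hp
  obtain ⟨x, y⟩ := p
  rw [mem_ball_zero_iff, Prod.norm_def, max_lt_iff] at hp
  obtain ⟨hx, hy⟩ := hp
  simp only at hx hy ⊢
  have h2 := two_pi_I_inv_smul_circleIntegral_sub_inv_smul_of_differentiable_on_off_countable
      (f := fun x => f (x, y)) (R := R) (c := 0) (w := x) (s := ∅) (by simp) (by simpa using hx)
      (by
        intro z hz
        have hz' : ‖z‖ ≤ R := by simpa using hz
        have := (hdf z y hz' hy.le).continuousAt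
        exact (ContinuousAt.comp (f := fun z => (z, y)) this
          (by fun_prop)).continuousWithinAt)
      (by
        intro z hz
        have hz' : ‖z‖ < R := by simpa using hz
        have := (hdf z y hz'.le hy.le)
        exact DifferentiableAt.comp z (f := fun z => (z, y)) this (by fun_prop))
  rw [← h2, hT]
  congr 1
  simp only [circleIntegral]
  apply intervalIntegral.integral_congr
  intro θ _
  have h3 := congrArg (fun g : C(K, ℂ) => g (cm θ)) (Ring.inverse_mul_cancel _ (hunit x hx))
  simp only [ContinuousMap.mul_apply, ContinuousMap.one_apply, ContinuousMap.sub_apply,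
    ContinuousMap.smul_apply, smul_eq_mul, mul_one] at h3
  have h4 := eq_inv_of_mul_eq_one_left h3
  simp only [ContinuousMap.mul_apply, h4, hF, hρ1 y hy.le, smul_eq_mul]
  rfl

open Filter Topology Metric Pointwise in
/-- Upper bound of Lemma 4.3: if `f` is holomorphic near `0 ∈ ℂ²`, not identically
zero near `0`, with vanishing order `k ≥ 1` at `0`, then for every `c > 2/k`
the function `z ↦ ‖f z‖ ^ (-2c)` is not integrable on any open neighborhood of `0`;
in particular `c₀(f) ≤ 2/k`. -/
theorem singularity_exponent_le_two_inv_order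
    (f : ℂ × ℂ → ℂ) (U : Set (ℂ × ℂ)) (hU : IsOpen U) (h0U : (0 : ℂ × ℂ) ∈ U)
    (hf : DifferentiableOn ℂ f U)
    (hnz : ¬ ∀ᶠ z in nhds (0 : ℂ × ℂ), f z = 0)
    (k : ℕ) (hk : 1 ≤ k)
    (horder_lt : ∀ j < k, iteratedFDeriv ℂ j f 0 = 0)
    (horder_ne : iteratedFDeriv ℂ k f 0 ≠ 0)
    (c : ℝ) (hc : 2 / (k : ℝ) < c) :
    ∀ V : Set (ℂ × ℂ), IsOpen V → (0 : ℂ × ℂ) ∈ V →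
      ¬ IntegrableOn (fun z => ‖f z‖ ^ (-(2 * c))) V volume := by
  intro V hV h0V hint
  obtain ⟨p, r, hp⟩ := osgood_aux f U hU h0U hf
  let P : ℂ × ℂ → ℂ := fun z => p k (fun _ => z)
  have hPc : Continuous P := by
    have := (p k).cont
    exact this.comp (by fun_prop : Continuous fun z : ℂ × ℂ => fun _ : Fin k => z)
  have hPs : ∀ (t : ℝ) z, P (t • z) = (t : ℂ) ^ k * P z := by
    intro t z
    have := (p k).map_smul_univ (fun _ => (t : ℂ)) (fun _ => z)
    simpa [P] using this
  have hpart : ∀ z, p.partialSum (k + 1) z = P z := by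
    intro z
    rw [FormalMultilinearSeries.partialSum, Finset.sum_range_succ, Finset.sum_eq_zero, zero_add]
    intro j hj
    have h1 := hp.factorial_smul z j
    rw [horder_lt j (Finset.mem_range.1 hj)] at h1
    simpa [Nat.factorial_ne_zero] using h1
  obtain ⟨v, hv⟩ : ∃ v, P v ≠ 0 := by
    by_contra! hP
    apply horder_ne
    ext w
    rw [hp.iteratedFDeriv_eq_sum_of_completeSpace,
      ← (p k).iteratedFDeriv_comp_diagonal 0 w]
    have : (fun x => (p k) fun _ => x) = fun _ : ℂ × ℂ => (0 : ℂ) := funext hP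
    rw [this]
    simp
  obtain ⟨C, hC, hbig⟩ := (hp.hasFPowerSeriesAt.isBigO_sub_partialSum_pow (k + 1)).exists_pos
  have hbig := hbig.bound
  simp only [hpart, zero_add, norm_pow, norm_norm] at hbig
  obtain ⟨δ, hδ, hball⟩ := Metric.eventually_nhds_iff_ball.1 (hbig.and (hV.mem_nhds h0V))
  set ε := ‖P v‖ / 2 with hε
  have hεpos : 0 < ε := by have := norm_pos_iff.2 hv; positivity
  have hnear : ∀ᶠ z in 𝓝 v, ‖P z‖ ∈ Set.Ioo ε (4 * ε) := by
    apply (hPc.norm.continuousAt (x := v)).eventually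
    apply Ioo_mem_nhds <;> linarith
  obtain ⟨s, hs, hB⟩ := Metric.eventually_nhds_iff_ball.1 hnear
  set N := ‖v‖ + s with hN
  have hNpos : 0 < N := by positivity
  have hBN : ∀ z ∈ ball v s, ‖z‖ ≤ N := by
    intro z hz
    have h1 := norm_le_norm_add_norm_sub' z v
    have h2 := mem_ball_iff_norm.1 hz
    linarith
  set M := 5 * ε with hM
  set m := volume.real (ball v s) with hm
  have hmpos : 0 < m := ENNReal.toReal_pos (measure_ball_pos _ _ hs).ne' measure_ball_lt_top.ne
  set I := ∫ z in V, ‖f z‖ ^ (-(2 * c)) with hI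
  have hcpos : 0 < c := lt_of_le_of_lt (by positivity) hc
  have hkpos : (0 : ℝ) < k := by exact_mod_cast hk
  have hck : 2 < c * k := (div_lt_iff₀ hkpos).1 hc
  -- smallness conditions
  have hsmall : ∀ᶠ t : ℝ in 𝓝[>] 0, 0 < t ∧ t * N < δ ∧ C * N ^ (k + 1) * t < ε / 2 := by
    refine (eventually_mem_nhdsWithin (s := Set.Ioi (0 : ℝ))).and
      (Filter.Eventually.filter_mono nhdsWithin_le_nhds (Filter.Eventually.and ?_ ?_))
    · exact ((by fun_prop : Continuous fun t : ℝ => t * N).tendsto 0).eventually_lt_const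
        (by simpa using hδ)
    · exact ((by fun_prop : Continuous fun t : ℝ => C * N ^ (k + 1) * t).tendsto 0
        ).eventually_lt_const (by simpa using hεpos)
  have hkey : ∀ᶠ t : ℝ in 𝓝[>] 0, (M ^ (-(2 * c)) * m) * t ^ (4 - 2 * c * k) ≤ I := by
    filter_upwards [hsmall] with t ht
    obtain ⟨ht, htδ, htε⟩ := ht
    have hpt : ∀ z ∈ ball v s, t • z ∈ V ∧ (M * t ^ k) ^ (-(2 * c)) ≤ ‖f (t • z)‖ ^ (-(2 * c)) := by
      intro z hz
      have hzN := hBN z hz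
      have hnorm : ‖t • z‖ = t * ‖z‖ := by rw [norm_smul, Real.norm_of_nonneg ht.le]
      have hlt : ‖t • z‖ ≤ t * N := by rw [hnorm]; gcongr
      obtain ⟨h1, h2⟩ := hball (t • z) (mem_ball_zero_iff.2 (hlt.trans_lt htδ))
      refine ⟨h2, ?_⟩
      obtain ⟨h3, h4⟩ := hB z hz
      have h5 : ‖P (t • z)‖ = t ^ k * ‖P z‖ := by
        rw [hPs, norm_mul, norm_pow, Complex.norm_real, Real.norm_of_nonneg ht.le]
      have htk : 0 < t ^ k := by positivity
      have h6 : C * ‖t • z‖ ^ (k + 1) ≤ t ^ k * (ε / 2) := by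
        calc C * ‖t • z‖ ^ (k + 1) ≤ C * (t * N) ^ (k + 1) := by gcongr
          _ = t ^ k * (C * N ^ (k + 1) * t) := by ring
          _ ≤ t ^ k * (ε / 2) := by gcongr
      have h7 := h1.trans h6
      have h8 := norm_sub_norm_le (P (t • z)) (f (t • z))
      have h9 := norm_sub_norm_le (f (t • z)) (P (t • z))
      rw [norm_sub_rev] at h8
      have h10 : t ^ k * ε < t ^ k * ‖P z‖ := by gcongr
      have h11 : t ^ k * ‖P z‖ < t ^ k * (4 * ε) := by gcongr
      have h12 : 0 < t ^ k * ε := by positivity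
      apply Real.rpow_le_rpow_of_nonpos
      · linarith
      · rw [hM]; linarith
      · linarith
    have hsub : t • ball v s ⊆ V := by
      rintro _ ⟨z, hz, rfl⟩
      exact (hpt z hz).1
    have hmeas : MeasurableSet (t • ball v s) := (isOpen_ball.smul₀ ht.ne').measurableSet
    have hvol : volume (t • ball v s) = ENNReal.ofReal (t ^ 4) * volume (ball v s) := by
      have : (volume : Measure (ℂ × ℂ)).IsAddHaarMeasure := by
        rw [Measure.volume_eq_prod]
        infer_instance
      rw [Measure.addHaar_smul]
      have : Module.finrank ℝ (ℂ × ℂ) = 4 := by simp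
      rw [this, abs_of_pos (by positivity)]
    have hvolr : volume.real (t • ball v s) = t ^ 4 * m := by
      rw [Measure.real, hvol, ENNReal.toReal_mul, ENNReal.toReal_ofReal (by positivity)]
      rfl
    have h1 := setIntegral_ge_of_const_le_real (μ := volume) (s := t • ball v s)
      (f := fun z => ‖f z‖ ^ (-(2 * c))) (c := (M * t ^ k) ^ (-(2 * c))) hmeas
      (by rw [hvol]; exact ENNReal.mul_ne_top ENNReal.ofReal_ne_top measure_ball_lt_top.ne)
      (by rintro _ ⟨z, hz, rfl⟩; exact (hpt z hz).2) (hint.mono_set hsub)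
    have h2 : ∫ z in t • ball v s, ‖f z‖ ^ (-(2 * c)) ≤ I :=
      setIntegral_mono_set hint (ae_of_all _ fun z => by positivity)
        (LE.le.eventuallyLE hsub)
    refine le_trans (le_of_eq ?_) (h1.trans h2)
    rw [hvolr, Real.mul_rpow (x := M) (y := t ^ k) (by positivity) (by positivity), ← Real.rpow_natCast t k,
      ← Real.rpow_mul ht.le, ← Real.rpow_natCast t 4,
      show (4 : ℝ) - 2 * c * k = k * (-(2 * c)) + (4 : ℕ) by push_cast; ring,
      Real.rpow_add ht]
    ring
  have htend : Tendsto (fun t : ℝ => (M ^ (-(2 * c)) * m) * t ^ (4 - 2 * c * k)) (𝓝[>] 0) atTop :=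
    (tendsto_rpow_neg_nhdsGT_zero (by linarith)).const_mul_atTop (by positivity)
  obtain ⟨t, h1, h2⟩ := (hkey.and (htend.eventually_gt_atTop I)).exists
  linarith
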